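/- For every information structure u, every garbling q ∈ 𝒬, and every payoff function g ∈ 𝒢: val(q.u, g) ≤ val(u, g) ≤ val(u.q, g). That is, the value is weakly decreasing when player 1's (the maximizer's) signal is garbled and weakly increasing when player 2's signal is garbled. -/

import Mathlib

open scoped BigOperators ENNReal

namespace ValueDistance

/-- An information structure: a probability distribution on `K × ℕ × ℕ`
(state, signal of player 1, signal of player 2). -/
abbrev InfoStruct (K : Type) := PMF (K × ℕ × ℕ)

/-- A behavior strategy / garbling : a map `ℕ → Δ(ℕ)`. -/
abbrev Garbling : Type := ℕ → PMF ℕ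

variable {K : Type}

/-- `g` is a payoff function with action bound `L` : values in `[-1,1]`,
`g k i j = -1` when `i ≥ L`, and `g k i j = 1` when `i < L` and `j ≥ L`. -/
def IsPayoffL (L : ℕ) (g : K → ℕ → ℕ → ℝ) : Prop :=
  (∀ k i j, g k i j ∈ Set.Icc (-1 : ℝ) 1) ∧
  (∀ k i j, L ≤ i → g k i j = -1) ∧
  (∀ k i j, i < L → L ≤ j → g k i j = 1)

/-- `g` belongs to the set `𝒢` of payoff functions. -/
def IsPayoff (g : K → ℕ → ℕ → ℝ) : Prop := ∃ L, IsPayoffL L g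

/-- `g` belongs to the set `𝒢₁` of single-agent (player 1) problems. -/
def IsPayoff1 (g : K → ℕ → ℕ → ℝ) : Prop :=
  IsPayoff g ∧ ∀ k i j j', g k i j = g k i j'

/-- Expected payoff in the Bayesian game `Γ(u,g)` when player 1 uses the behavior
strategy `σ` and player 2 uses `τ`. -/
noncomputable def payoff (u : InfoStruct K) (g : K → ℕ → ℕ → ℝ)
    (σ τ : Garbling) : ℝ :=
  ∑' (x : K × ℕ × ℕ) (i : ℕ) (j : ℕ),
    (u x).toReal * (σ x.2.1 i).toReal * (τ x.2.2 j).toReal * g x.1 i j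

/-- The value `val(u,g)` of the zero-sum Bayesian game `Γ(u,g)`
(the common value of `sup inf` and `inf sup` of the expected payoff;
we take `sup inf` as the definition). -/
noncomputable def val (u : InfoStruct K) (g : K → ℕ → ℕ → ℝ) : ℝ :=
  ⨆ σ : Garbling, ⨅ τ : Garbling, payoff u g σ τ

/-- Total variation distance `‖u − v‖`. -/
noncomputable def tv {α : Type} (u v : PMF α) : ℝ :=
  ∑' x : α, |(u x).toReal - (v x).toReal|

/-- `q.u` : player 1's signal garbled through `q`. -/
noncomputable def garbleLeft (q : Garbling) (u : InfoStruct K) : InfoStruct K :=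
  u.bind (fun x => (q x.2.1).map (fun c => (x.1, c, x.2.2)))

/-- `u.q` : player 2's signal garbled through `q`. -/
noncomputable def garbleRight (u : InfoStruct K) (q : Garbling) : InfoStruct K :=
  u.bind (fun x => (q x.2.2).map (fun d => (x.1, x.2.1, d)))

/-- The value-based distance `d(u,v) = sup_{g ∈ 𝒢} |val(u,g) − val(v,g)|`. -/
noncomputable def dVal (u v : InfoStruct K) : ℝ :=
  ⨆ g : {g : K → ℕ → ℕ → ℝ // IsPayoff g}, |val u g.1 - val v g.1|

/-- The single-agent distance `d₁(u,v) = sup_{g ∈ 𝒢₁} |val(u,g) − val(v,g)|`. -/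
noncomputable def d1 (u v : InfoStruct K) : ℝ :=
  ⨆ g : {g : K → ℕ → ℕ → ℝ // IsPayoff1 g}, |val u g.1 - val v g.1|

/-- Marginal of an information structure on `K × ℕ` (state, player 1's signal). -/
noncomputable def marg1 (u : InfoStruct K) : PMF (K × ℕ) :=
  u.map (fun x => (x.1, x.2.1))

/-- Garbling of a single-agent information structure:
`(q.w)(k,c) = Σ_s w(k,s)·q(s)({c})`. -/
noncomputable def garble1 (q : Garbling) (w : PMF (K × ℕ)) : PMF (K × ℕ) :=
  w.bind (fun x => (q x.2).map (fun c => (x.1, c)))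

/-- Marginal of an information structure on the states. -/
noncomputable def margK (u : InfoStruct K) : PMF K := u.map Prod.fst

/-- Marginal of an information structure on `K × ℕ` (state, player 2's signal). -/
noncomputable def margKD (u : InfoStruct K) : PMF (K × ℕ) :=
  u.map (fun x => (x.1, x.2.2))

/-- `σ.q` : on signal `c`, draw `c'` according to `q(c)` and play `σ(c')`. -/
noncomputable def compGarble (σ q : Garbling) : Garbling :=
  fun c => (q c).bind σ

/-- `u ∈ 𝒰(L)` : both players' signals are `< L` with probability 1. -/
def InU (L : ℕ) (u : InfoStruct K) : Prop :=
  ∀ x : K × ℕ × ℕ, u x ≠ 0 → x.2.1 < L ∧ x.2.2 < L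

/-- `q ∈ 𝒬(L)` : garbling with values supported on `{0,…,L−1}`. -/
def GarblingIn (L : ℕ) (q : Garbling) : Prop :=
  ∀ n m, q n m ≠ 0 → m < L

/-- The two players' signals are conditionally independent given the state:
`u(k)·u(k,c,d) = u(k,c)·u(k,d)` for all `k, c, d`
(equivalently `u(c,d|k) = u(c|k)·u(d|k)` whenever `u(k) > 0`). -/
def CondIndep (u : InfoStruct K) : Prop :=
  ∀ (k : K) (c d : ℕ),
    (∑' y : ℕ × ℕ, u (k, y)) * u (k, c, d)
      = (∑' d' : ℕ, u (k, c, d')) * (∑' c' : ℕ, u (k, c', d))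

end ValueDistance

namespace ValueDistance

noncomputable def EE {α : Type} (p : PMF α) (f : α → ℝ) : ℝ := ∑' x, (p x).toReal * f x

lemma summable_bd {α : Type} (w : α → ℝ≥0∞) (hw : ∑' x, w x ≠ ⊤) (f : α → ℝ)
    (hf : ∀ x, |f x| ≤ 1) : Summable (fun x => (w x).toReal * f x) := by
  refine Summable.of_norm_bounded (ENNReal.summable_toReal hw) (fun x => ?_)
  rw [norm_mul, Real.norm_eq_abs, Real.norm_eq_abs, abs_of_nonneg ENNReal.toReal_nonneg]
  exact mul_le_of_le_one_right ENNReal.toReal_nonneg (hf x)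

lemma EE_abs_le {α : Type} (p : PMF α) (f : α → ℝ) (hf : ∀ x, |f x| ≤ 1) : |EE p f| ≤ 1 := by
  have hp : ∑' x, p x ≠ ⊤ := p.tsum_coe_ne_top
  have h1 : ∑' x, (p x).toReal = 1 := by
    rw [← ENNReal.tsum_toReal_eq (fun a => p.apply_ne_top a), p.tsum_coe]; rfl
  have h2 : HasSum (fun x => (p x).toReal) 1 := h1 ▸ (ENNReal.summable_toReal hp).hasSum
  have := tsum_of_norm_bounded h2 (f := fun x => (p x).toReal * f x) (fun x => by
    rw [norm_mul, Real.norm_eq_abs, Real.norm_eq_abs, abs_of_nonneg ENNReal.toReal_nonneg]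
    exact mul_le_of_le_one_right ENNReal.toReal_nonneg (hf x))
  exact this

lemma EE_joint {α β : Type} (p : PMF α) (f : α → PMF β) (h : α → β → ℝ)
    (hh : ∀ a b, |h a b| ≤ 1) :
    ∑' b, ∑' a, (p a).toReal * (f a b).toReal * h a b = EE p (fun a => EE (f a) (h a)) := by
  have hs : Summable (Function.uncurry
      (fun (a : α) (b : β) => (p a).toReal * (f a b).toReal * h a b)) := by
    have := summable_bd (fun x : α × β => p x.1 * f x.1 x.2) (by
      rw [ENNReal.tsum_prod']
      simp only [ENNReal.tsum_mul_left, PMF.tsum_coe, mul_one]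
      exact ENNReal.one_ne_top) (fun x => h x.1 x.2) (fun x => hh _ _)
    refine this.congr (fun x => ?_)
    simp [Function.uncurry, ENNReal.toReal_mul]
  rw [hs.tsum_comm]
  unfold EE
  simp only [mul_assoc, tsum_mul_left]

lemma EE_bind {α β : Type} (p : PMF α) (f : α → PMF β) (h : β → ℝ) (hh : ∀ b, |h b| ≤ 1) :
    EE (p.bind f) h = EE p (fun a => EE (f a) h) := by
  rw [← EE_joint p f (fun _ => h) (fun _ => hh)]
  unfold EE
  refine tsum_congr (fun b => ?_)
  rw [PMF.bind_apply, ENNReal.tsum_toReal_eq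
    (fun a => ENNReal.mul_ne_top (p.apply_ne_top a) ((f a).apply_ne_top b)), ← tsum_mul_right]
  simp only [ENNReal.toReal_mul]

lemma EE_pure {α : Type} (a : α) (h : α → ℝ) : EE (PMF.pure a) h = h a := by
  unfold EE
  rw [tsum_eq_single a]
  · simp
  · intro b hb
    simp [PMF.pure_apply, hb]

lemma EE_map {α β : Type} (p : PMF α) (f : α → β) (h : β → ℝ) (hh : ∀ b, |h b| ≤ 1) :
    EE (p.map f) h = EE p (fun a => h (f a)) := by
  rw [← PMF.bind_pure_comp, EE_bind p _ h hh]
  simp only [Function.comp, EE_pure]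

lemma EE_comm {α β : Type} (p : PMF α) (r : PMF β) (h : α → β → ℝ)
    (hh : ∀ a b, |h a b| ≤ 1) :
    EE p (fun a => EE r (h a)) = EE r (fun b => EE p (fun a => h a b)) := by
  rw [← EE_joint p (fun _ => r) h hh]
  unfold EE
  refine tsum_congr (fun b => ?_)
  rw [← tsum_mul_left]
  exact tsum_congr (fun a => by ring)

lemma payoff_eq {K : Type} (u : InfoStruct K) (g : K → ℕ → ℕ → ℝ) (σ τ : Garbling) :
    payoff u g σ τ =
      EE u (fun x => EE (σ x.2.1) (fun i => EE (τ x.2.2) (fun j => g x.1 i j))) := by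
  unfold payoff EE
  simp only [mul_assoc, tsum_mul_left]

lemma payoff_abs {K : Type} (u : InfoStruct K) (g : K → ℕ → ℕ → ℝ)
    (hg : ∀ k i j, |g k i j| ≤ 1) (σ τ : Garbling) : |payoff u g σ τ| ≤ 1 := by
  rw [payoff_eq]
  exact EE_abs_le _ _ fun x => EE_abs_le _ _ fun i => EE_abs_le _ _ fun j => hg _ _ _

lemma payoff_left {K : Type} (u : InfoStruct K) (q : Garbling) (g : K → ℕ → ℕ → ℝ)
    (hg : ∀ k i j, |g k i j| ≤ 1) (σ τ : Garbling) :
    payoff (garbleLeft q u) g σ τ = payoff u g (compGarble σ q) τ := by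
  have h3 : ∀ x : K × ℕ × ℕ, ∀ i, |EE (τ x.2.2) (fun j => g x.1 i j)| ≤ 1 :=
    fun x i => EE_abs_le _ _ fun j => hg _ _ _
  have h2 : ∀ x : K × ℕ × ℕ,
      |EE (σ x.2.1) (fun i => EE (τ x.2.2) (fun j => g x.1 i j))| ≤ 1 :=
    fun x => EE_abs_le _ _ (h3 x)
  rw [payoff_eq, payoff_eq, garbleLeft, EE_bind _ _ _ h2]
  congr 1
  funext x
  rw [EE_map _ _ _ h2, compGarble, EE_bind _ _ _ (h3 x)]

lemma payoff_right {K : Type} (u : InfoStruct K) (q : Garbling) (g : K → ℕ → ℕ → ℝ)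
    (hg : ∀ k i j, |g k i j| ≤ 1) (σ τ : Garbling) :
    payoff (garbleRight u q) g σ τ = payoff u g σ (compGarble τ q) := by
  have h3 : ∀ x : K × ℕ × ℕ, ∀ i, |EE (τ x.2.2) (fun j => g x.1 i j)| ≤ 1 :=
    fun x i => EE_abs_le _ _ fun j => hg _ _ _
  have h2 : ∀ x : K × ℕ × ℕ,
      |EE (σ x.2.1) (fun i => EE (τ x.2.2) (fun j => g x.1 i j))| ≤ 1 :=
    fun x => EE_abs_le _ _ (h3 x)
  rw [payoff_eq, payoff_eq, garbleRight, EE_bind _ _ _ h2]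
  congr 1
  funext x
  rw [EE_map _ _ _ h2]
  simp only
  rw [EE_comm _ _ (fun d i => EE (τ d) (fun j => g x.1 i j))
    (fun d i => EE_abs_le _ _ fun j => hg _ _ _)]
  congr 1
  funext i
  rw [compGarble, EE_bind _ _ _ (hg x.1 i)]


/-- Monotonicity of the value in information: garbling the maximizer's signal
weakly decreases the value and garbling the minimizer's signal weakly
increases it: `val(q.u, g) ≤ val(u, g) ≤ val(u.q, g)`. -/
theorem val_monotone_garbling (K : Type) [Fintype K]
    (hK : 2 ≤ Fintype.card K) (u : InfoStruct K) (q : Garbling)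
    (g : K → ℕ → ℕ → ℝ) (hg : IsPayoff g) :
    val (garbleLeft q u) g ≤ val u g ∧ val u g ≤ val (garbleRight u q) g := by
  obtain ⟨L, hg1, -, -⟩ := hg
  have hb : ∀ k i j, |g k i j| ≤ 1 := fun k i j => abs_le.2 (hg1 k i j)
  have hbelow : ∀ (v : InfoStruct K) (σ : Garbling),
      BddBelow (Set.range fun τ : Garbling => payoff v g σ τ) := by
    rintro v σ
    refine ⟨-1, ?_⟩
    rintro _ ⟨τ, rfl⟩
    exact (abs_le.1 (payoff_abs v g hb σ τ)).1
  have : Nonempty Garbling := ⟨fun _ => PMF.pure 0⟩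
  have habove : ∀ v : InfoStruct K,
      BddAbove (Set.range fun σ : Garbling => ⨅ τ : Garbling, payoff v g σ τ) := by
    intro v
    refine ⟨1, ?_⟩
    rintro _ ⟨σ, rfl⟩
    exact (ciInf_le (hbelow v σ) (fun _ => PMF.pure 0)).trans
      (abs_le.1 (payoff_abs v g hb σ _)).2
  constructor
  · refine ciSup_le fun σ => ?_
    simp only [payoff_left u q g hb]
    exact le_ciSup (habove u) (compGarble σ q)
  · refine ciSup_mono (habove _) fun σ => ?_
    simp only [payoff_right u q g hb]
    exact le_ciInf fun τ => ciInf_le (hbelow u σ) (compGarble τ q)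

end ValueDistance
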